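/- Let (Q,·,e) be a loop with left and middle nuclear squares, let a ∈ Nuc_ℓ(Q) ∩ Nuc_m(Q) and x ∈ Q. Then L_x^{-1} ∘ L_a ∘ L_x = L_{x\(a·x)}, and x\(a·x) lies in Nuc_ℓ(Q) ∩ Nuc_m(Q). -/

import Mathlib

/-- A loop `(Q, ·, e)`: a quasigroup with two-sided identity, presented with
explicit left division `ldiv a b = a \ b` and right division `rdiv b a = b / a`. -/
structure LoopStr (Q : Type*) where
  mul : Q → Q → Q
  e : Q
  ldiv : Q → Q → Q
  rdiv : Q → Q → Q
  one_mul : ∀ x, mul e x = x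
  mul_one : ∀ x, mul x e = x
  mul_ldiv : ∀ a b, mul a (ldiv a b) = b
  ldiv_mul : ∀ a b, ldiv a (mul a b) = b
  rdiv_mul : ∀ a b, mul (rdiv b a) a = b
  mul_rdiv : ∀ a b, rdiv (mul b a) a = b

namespace LoopStr

variable {Q : Type*} (S : LoopStr Q)

/-- The left inverse `x^ℓ = e / x`. -/
def linv (x : Q) : Q := S.rdiv S.e x

/-- The right inverse `x^r = x \ e`. -/
def rinv (x : Q) : Q := S.ldiv x S.e

/-- The left nucleus. -/
def lnuc : Set Q := {a | ∀ x y, S.mul (S.mul a x) y = S.mul a (S.mul x y)}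

/-- The middle nucleus. -/
def mnuc : Set Q := {a | ∀ x y, S.mul (S.mul x a) y = S.mul x (S.mul a y)}

/-- The right nucleus. -/
def rnuc : Set Q := {a | ∀ x y, S.mul (S.mul x y) a = S.mul x (S.mul y a)}

/-- The commutant `C(Q)`. -/
def commutant : Set Q := {a | ∀ x, S.mul a x = S.mul x a}

/-- The center `Z(Q) = C(Q) ∩ Nuc_ℓ ∩ Nuc_m ∩ Nuc_r`. -/
def center : Set Q := S.commutant ∩ S.lnuc ∩ S.mnuc ∩ S.rnuc

/-- The left translation `L_a` as a map. -/
def leftMul (a : Q) : Q → Q := fun x => S.mul a x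

/-- The left translation `L_a` as a permutation of `Q`. -/
def leftPerm (a : Q) : Equiv.Perm Q :=
  ⟨fun x => S.mul a x, fun x => S.ldiv a x, S.ldiv_mul a, S.mul_ldiv a⟩

/-- The right translation `R_a` as a permutation of `Q`. -/
def rightPerm (a : Q) : Equiv.Perm Q :=
  ⟨fun x => S.mul x a, fun x => S.rdiv x a, fun x => S.mul_rdiv a x, fun x => S.rdiv_mul a x⟩

/-- The multiplication group `Mlt(Q) = ⟨L_x, R_x : x ∈ Q⟩ ≤ Sym(Q)`. -/
def Mlt : Subgroup (Equiv.Perm Q) :=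
  Subgroup.closure (Set.range S.leftPerm ∪ Set.range S.rightPerm)

/-- `x^n = L_x^n(e)` for natural `n`. -/
def npow (a : Q) (n : ℕ) : Q := (S.leftPerm a ^ n) S.e

/-- `x^n = L_x^n(e)` for integer `n`. -/
def zpow (a : Q) (n : ℤ) : Q := (S.leftPerm a ^ n) S.e

/-- The order of an element: the least `n > 0` with `x^n = e` (or `0` if none exists). -/
noncomputable def lorder (a : Q) : ℕ := sInf {n : ℕ | 0 < n ∧ S.npow a n = S.e}

/-- A subloop: contains `e`, closed under multiplication and both divisions. -/
def IsSubloop (N : Set Q) : Prop :=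
  S.e ∈ N ∧ (∀ a ∈ N, ∀ b ∈ N, S.mul a b ∈ N) ∧
    (∀ a ∈ N, ∀ b ∈ N, S.ldiv a b ∈ N) ∧ (∀ a ∈ N, ∀ b ∈ N, S.rdiv a b ∈ N)

/-- A normal subloop: a subloop with `xN = Nx`, `(xN)y = x(Ny)`, `N(xy) = (Nx)y`
elementwise as sets. -/
def IsNormalSubloop (N : Set Q) : Prop :=
  S.IsSubloop N ∧
  (∀ x : Q, (fun a => S.mul x a) '' N = (fun a => S.mul a x) '' N) ∧
  (∀ x y : Q, (fun a => S.mul (S.mul x a) y) '' N = (fun a => S.mul x (S.mul a y)) '' N) ∧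
  (∀ x y : Q, (fun a => S.mul a (S.mul x y)) '' N = (fun a => S.mul (S.mul a x) y) '' N)

/-- A loop is simple if its only normal subloops are `{e}` and `Q`. -/
def IsSimple : Prop :=
  ∀ N : Set Q, S.IsNormalSubloop N → N = {S.e} ∨ N = Set.univ

lemma mul_rinv (x : Q) : S.mul x (S.rinv x) = S.e := S.mul_ldiv x S.e

lemma linv_mul (x : Q) : S.mul (S.linv x) x = S.e := S.rdiv_mul x S.e

lemma linv_rinv (x : Q) : S.linv (S.rinv x) = x := by
  have h := S.mul_rdiv (S.rinv x) x
  rw [S.mul_rinv] at h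
  exact h

lemma rinv_linv (x : Q) : S.rinv (S.linv x) = x := by
  have h := S.ldiv_mul (S.linv x) x
  rw [S.linv_mul] at h
  exact h

lemma rinv_e : S.rinv S.e = S.e := by
  have h := S.ldiv_mul S.e S.e
  rw [S.one_mul] at h
  exact h

lemma rdiv_e (x : Q) : S.rdiv x S.e = x := by
  have h := S.mul_rdiv S.e x
  rw [S.mul_one] at h
  exact h

/-- The principal right isostrophe `(Q, ∘)` of `(Q, ·)`, with `x ∘ y = x / (y^r)`,
right division `x // y = x·(y^r)` and left division `x \\ y = (y \ x)^ℓ`. -/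
def iso : LoopStr Q where
  mul x y := S.rdiv x (S.rinv y)
  e := S.e
  ldiv x y := S.linv (S.ldiv y x)
  rdiv x y := S.mul x (S.rinv y)
  one_mul x := S.linv_rinv x
  mul_one x := by
    show S.rdiv x (S.rinv S.e) = x
    rw [S.rinv_e, S.rdiv_e]
  mul_ldiv a b := by
    show S.rdiv a (S.rinv (S.linv (S.ldiv b a))) = b
    rw [S.rinv_linv]
    have h := S.mul_rdiv (S.ldiv b a) b
    rw [S.mul_ldiv] at h
    exact h
  ldiv_mul a b := by
    show S.linv (S.ldiv (S.rdiv a (S.rinv b)) a) = b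
    have h := S.ldiv_mul (S.rdiv a (S.rinv b)) (S.rinv b)
    rw [S.rdiv_mul] at h
    rw [h, S.linv_rinv]
  rdiv_mul a b := by
    show S.rdiv (S.mul b (S.rinv a)) (S.rinv a) = b
    exact S.mul_rdiv (S.rinv a) b
  mul_rdiv a b := by
    show S.mul (S.rdiv b (S.rinv a)) (S.rinv a) = b
    exact S.rdiv_mul (S.rinv a) b

end LoopStr

namespace LoopStr

variable {Q : Type*} (S : LoopStr Q)

lemma mul_left_cancel {a b c : Q} (h : S.mul a b = S.mul a c) : b = c := by
  rw [← S.ldiv_mul a b, h, S.ldiv_mul]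

lemma mul_right_cancel {a b c : Q} (h : S.mul b a = S.mul c a) : b = c := by
  rw [← S.mul_rdiv a b, h, S.mul_rdiv]

lemma mul_mem_lnuc_inter_mnuc {u v : Q} (hu : u ∈ S.lnuc ∩ S.mnuc)
    (hv : v ∈ S.lnuc ∩ S.mnuc) : S.mul u v ∈ S.lnuc ∩ S.mnuc := by
  obtain ⟨hul, hum⟩ := hu
  obtain ⟨hvl, hvm⟩ := hv
  refine ⟨fun x y => ?_, fun x y => ?_⟩
  · rw [hul, hul, hvl, hul]
  · rw [← hum, hvm, hum, hul]

lemma mul_linv_of_mem_lnuc_inter_mnuc {v : Q} (hv : v ∈ S.lnuc ∩ S.mnuc) :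
    S.mul v (S.linv v) = S.e := by
  apply S.mul_right_cancel (a := v)
  rw [hv.1, S.linv_mul, S.mul_one, S.one_mul]

lemma linv_mem_lnuc_inter_mnuc {v : Q} (hv : v ∈ S.lnuc ∩ S.mnuc) :
    S.linv v ∈ S.lnuc ∩ S.mnuc := by
  have hinv := S.mul_linv_of_mem_lnuc_inter_mnuc hv
  obtain ⟨hvl, hvm⟩ := hv
  refine ⟨fun x y => ?_, fun x y => ?_⟩
  · obtain ⟨z, rfl⟩ : ∃ z, S.mul v z = x := ⟨_, S.mul_ldiv v x⟩
    rw [← hvm, S.linv_mul, S.one_mul, hvl, ← hvm, S.linv_mul, S.one_mul]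
  · obtain ⟨z, rfl⟩ : ∃ z, S.mul z v = x := ⟨_, S.rdiv_mul v x⟩
    rw [hvm, hinv, S.mul_one, hvm, ← hvl, hinv, S.one_mul]

/-- With left and middle nuclear squares, `Nuc_ℓ ∩ Nuc_m` is closed under `a ↦ x \ (a·x)`. -/
lemma ldiv_mul_mem_lnuc_inter_mnuc (h : ∀ x : Q, S.mul x x ∈ S.lnuc ∩ S.mnuc)
    {a : Q} (ha : a ∈ S.lnuc ∩ S.mnuc) (x : Q) :
    S.ldiv x (S.mul a x) ∈ S.lnuc ∩ S.mnuc := by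
  set m := S.mul a (S.mul x x) with hm
  have hmN : m ∈ S.lnuc ∩ S.mnuc := S.mul_mem_lnuc_inter_mnuc ha (h x)
  set y := S.ldiv x m
  have hxy : S.mul x y = m := S.mul_ldiv x m
  set c := S.mul (S.mul y y) (S.linv m)
  have hc : c ∈ S.lnuc ∩ S.mnuc :=
    S.mul_mem_lnuc_inter_mnuc (h y) (S.linv_mem_lnuc_inter_mnuc hmN)
  have hcx : S.mul c x = y := by
    apply S.mul_right_cancel (a := y)
    rw [hc.1, hxy, (h y).1, S.linv_mul, S.mul_one]
  have hxc : S.mul x c = S.mul a x := by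
    apply S.mul_right_cancel (a := x)
    rw [hc.2, hcx, hxy, hm, ha.1]
  rwa [← hxc, S.ldiv_mul]

end LoopStr

/-- In a loop with left and middle nuclear squares, for
`a ∈ Nuc_ℓ(Q) ∩ Nuc_m(Q)` and `x ∈ Q`, `L_x⁻¹ ∘ L_a ∘ L_x = L_{x \ (a·x)}`, and
`x \ (a·x)` lies in `Nuc_ℓ(Q) ∩ Nuc_m(Q)`.
(Here `L_x⁻¹` is the map `y ↦ x \ y`.) -/
theorem conj_leftMul' {Q : Type*} (S : LoopStr Q)
    (h : ∀ x : Q, S.mul x x ∈ S.lnuc ∩ S.mnuc)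
    (a : Q) (ha : a ∈ S.lnuc ∩ S.mnuc) (x : Q) :
    S.ldiv x ∘ S.leftMul a ∘ S.leftMul x = S.leftMul (S.ldiv x (S.mul a x)) ∧
    S.ldiv x (S.mul a x) ∈ S.lnuc ∩ S.mnuc := by
  have hb := S.ldiv_mul_mem_lnuc_inter_mnuc h ha x
  refine ⟨funext fun y => ?_, hb⟩
  apply S.mul_left_cancel (a := x)
  simp only [Function.comp_apply, LoopStr.leftMul]
  rw [S.mul_ldiv, ← hb.2, S.mul_ldiv, ha.1]
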